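/- For every r ≥ 2 and every n ≥ 1, t^(r)(n) ≥ ⌊L_r(n)/2⌋; consequently, combined with the bound L_r(n) ≥ (1/2)·n^{1/(2^r−1)}, one gets t^(r)(n) = Ω(n^{1/(2^r − 1)}), i.e., t^(r)(n) ≥ ⌊(1/4)·n^{1/(2^r−1)}⌋ for all n ≥ 1. -/

import Mathlib

/-- A (sub-)matching: a finite set of pairwise disjoint `r`-element subsets
("edges") of the linearly ordered vertex set `ℕ`. -/
def IsMatching (r : ℕ) (M : Finset (Finset ℕ)) : Prop :=
  (∀ e ∈ M, e.card = r) ∧ ∀ e ∈ M, ∀ f ∈ M, e ≠ f → Disjoint e f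

/-- The vertex support of a matching: the union of its edges. -/
def mSupport (M : Finset (Finset ℕ)) : Finset ℕ := M.sup id

/-- An ordered `r`-matching of size `n`: `n` pairwise disjoint `r`-element edges
partitioning `[rn] = {1, …, rn}`. -/
def IsOrderedMatching (r n : ℕ) (M : Finset (Finset ℕ)) : Prop :=
  IsMatching r M ∧ M.card = n ∧ mSupport M = Finset.Icc 1 (r * n)

/-- Two ordered matchings are isomorphic if some (equivalently, the unique)
order-preserving bijection between their vertex supports maps edges onto edges. -/
def MatchIso (M N : Finset (Finset ℕ)) : Prop :=
  ∃ f : ℕ → ℕ, Set.BijOn f (mSupport M : Set ℕ) (mSupport N : Set ℕ) ∧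
    (∀ x ∈ mSupport M, ∀ y ∈ mSupport M, x < y → f x < f y) ∧
    N = M.image fun e => e.image f

/-- `M` contains twins of size `k`: a pair of vertex-disjoint isomorphic
sub-matchings of `M`, each with `k` edges. -/
def HasTwins (M : Finset (Finset ℕ)) (k : ℕ) : Prop :=
  ∃ M₁ M₂ : Finset (Finset ℕ), M₁ ⊆ M ∧ M₂ ⊆ M ∧
    Disjoint (mSupport M₁) (mSupport M₂) ∧ MatchIso M₁ M₂ ∧
    M₁.card = k ∧ M₂.card = k

/-- `t(M)`: the maximum size of twins in `M`. -/
noncomputable def twinMax (M : Finset (Finset ℕ)) : ℕ := sSup {k | HasTwins M k}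

/-- `t^(r)(n)`: the minimum of `t(M)` over all ordered `r`-matchings of size `n`. -/
noncomputable def minTwins (r n : ℕ) : ℕ :=
  sInf {t | ∃ M, IsOrderedMatching r n M ∧ twinMax M = t}

/-- A permutation `π` of `[n]` has twins of length `k`: two order-isomorphic
subsequences occupying disjoint sets of positions. -/
def PermTwins {n : ℕ} (π : Equiv.Perm (Fin n)) (k : ℕ) : Prop :=
  ∃ a b : Fin k → Fin n, StrictMono a ∧ StrictMono b ∧
    (∀ i j, a i ≠ b j) ∧ ∀ i j, (π (a i) < π (a j) ↔ π (b i) < π (b j))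

/-- `τ(n)`: the largest `k` such that every permutation of `[n]` has twins of length `k`. -/
noncomputable def permTau (n : ℕ) : ℕ :=
  sSup {k | ∀ π : Equiv.Perm (Fin n), PermTwins π k}

/-- An `r`-pattern, represented by its canonical representative: an ordered
`r`-matching of size `2` (on the vertex set `[2r]`). Every isomorphism class of
ordered `r`-matchings of size `2` contains exactly one such representative. -/
def IsPattern (r : ℕ) (P : Finset (Finset ℕ)) : Prop := IsOrderedMatching r 2 P

/-- A `P`-clique: a matching all of whose pairs of (distinct) edges form the pattern `P`. -/
def IsPClique (P M : Finset (Finset ℕ)) : Prop :=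
  ∀ e ∈ M, ∀ f ∈ M, e ≠ f → MatchIso {e, f} P

/-- `L(M)`: the size of the largest sub-matching of `M` that is a `P`-clique,
over all `r`-patterns `P`. -/
noncomputable def cliqueMax (r : ℕ) (M : Finset (Finset ℕ)) : ℕ :=
  sSup {k | ∃ P, IsPattern r P ∧ ∃ M' ⊆ M, IsPClique P M' ∧ M'.card = k}

/-- `L_r(n)`: the minimum of `L(M)` over all ordered `r`-matchings of size `n`. -/
noncomputable def minClique (r n : ℕ) : ℕ :=
  sInf {l | ∃ M, IsOrderedMatching r n M ∧ cliqueMax r M = l}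

/-!
A clique has all its pairs of edges interleaved in the same way, so any two disjoint subsets of it
of the same size are twins.

For the lower bound on `L_r(n)`, call a position `d` a cut of a family of edges if all vertices in
positions before `d` precede all vertices in position `d`, and let `D` be a set of cuts, which
divides each edge into blocks. Each choice of a sign for every element of `D` gives a strict
partial order on the edges, comparing all blocks separately, whose chains are cliques. If cliques
have at most `k` edges then, by Mirsky's theorem for these `2 ^ #D` orders, a common antichain
contains at least a fraction `k ^ (-2 ^ #D)` of the edges. For any two edges of a common antichain,
the first vertex of some block of one of them lies in a gap inside the same block of the other.
The edges with a given vertex in a given gap have a further cut there and are bounded by recursion.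
Once each position is the start of a block, the exponents have added up to
`2 ^ 0 + 2 ^ 1 + ⋯ + 2 ^ (r - 1) = 2 ^ r - 1`.
-/

section

open Finset

section Counting

/-! ### Chains, antichains and tournaments -/

variable {α κ : Type*} {S : Finset α}

theorem exists_rank_of_card_chain_le (lt : α → α → Prop) [IsStrictOrder α lt] {k : ℕ}
    (hk : ∀ T ⊆ S, IsChain lt (T : Set α) → #T ≤ k) :
    ∃ h : α → ℕ, (∀ a ∈ S, h a < k) ∧ ∀ a ∈ S, ∀ b, lt a b → h a < h b := by
  classical
  let chainsBelow (a : α) : Finset (Finset α) :=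
    {T ∈ S.powerset | IsChain lt (T : Set α) ∧ ∀ x ∈ T, lt x a}
  have exists_insert (a : α) (ha : a ∈ S) : ∃ T ⊆ S, IsChain lt (T : Set α) ∧
      #T = (chainsBelow a).sup card + 1 ∧ ∀ b, lt a b → ∀ x ∈ T, lt x b := by
    obtain ⟨T, hT, hTsup⟩ :=
      exists_mem_eq_sup (chainsBelow a) ⟨∅, by simp [chainsBelow]⟩ card
    obtain ⟨hTS, hchain, hlt⟩ : T ⊆ S ∧ IsChain lt (T : Set α) ∧ ∀ x ∈ T, lt x a := by
      simpa [chainsBelow] using hT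
    have haT : a ∉ T := fun h ↦ irrefl a (hlt a h)
    refine ⟨insert a T, insert_subset ha hTS, ?_, by rw [card_insert_of_notMem haT, hTsup], ?_⟩
    · rw [coe_insert]
      exact hchain.insert fun x hx _ ↦ .inr (hlt x hx)
    · intro b hab x hx
      obtain rfl | hx := mem_insert.1 hx
      · exact hab
      · exact _root_.trans (hlt x hx) hab
  refine ⟨fun a ↦ (chainsBelow a).sup card, fun a ha ↦ ?_, fun a ha b hab ↦ ?_⟩ <;>
    obtain ⟨T, hTS, hchain, hcard, hlt⟩ := exists_insert a ha
  · exact hcard.symm.trans_le (hk T hTS hchain)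
  · have hT : T ∈ chainsBelow b := by simpa [chainsBelow, hTS, hchain] using hlt b hab
    exact hcard.symm.trans_le (le_sup (f := card) hT)

theorem card_le_of_card_chain_le_of_card_antichain_le [Fintype κ] (lt : κ → α → α → Prop)
    [∀ x, IsStrictOrder α (lt x)] {k b : ℕ}
    (hk : ∀ x, ∀ T ⊆ S, IsChain (lt x) (T : Set α) → #T ≤ k)
    (hb : ∀ T ⊆ S, (∀ x, IsAntichain (lt x) (T : Set α)) → #T ≤ b) :
    #S ≤ k ^ Fintype.card κ * b := by
  classical
  choose h h_lt h_mono using fun x ↦ exists_rank_of_card_chain_le (lt x) (hk x)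
  have maps_to : ∀ a ∈ S, (fun x ↦ h x a) ∈ Fintype.piFinset fun _ : κ ↦ range k :=
    fun a ha ↦ Fintype.mem_piFinset.2 fun x ↦ mem_range.2 (h_lt x a ha)
  have fiber_antichain (c : κ → ℕ) (x : κ) :
      IsAntichain (lt x) ({a ∈ S | (fun x ↦ h x a) = c} : Set α) := by
    rintro a ⟨ha, rfl⟩ b ⟨-, hb⟩ - hab
    exact (h_mono x a ha b hab).ne' (congrFun hb x)
  calc #S ≤ b * #(Fintype.piFinset fun _ : κ ↦ range k) :=
        card_le_mul_card_image_of_maps_to maps_to b fun c _ ↦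
          hb _ (filter_subset _ _) fun x ↦ by simpa using fiber_antichain c x
    _ = k ^ Fintype.card κ * b := by simp [mul_comm]

theorem card_le_of_forall_mem_or_mem {T : Finset α} {c : ℕ} (N : α → Finset α)
    (hN : ∀ a ∈ T, #(N a) ≤ c) (hT : ∀ a ∈ T, ∀ b ∈ T, a ≠ b → a ∈ N b ∨ b ∈ N a) :
    #T ≤ 2 * c + 1 := by
  classical
  have offDiag_subset : T.offDiag ⊆ T.biUnion fun a ↦ {a} ×ˢ N a ∪ N a ×ˢ {a} := by
    rintro ⟨a, b⟩ hab
    obtain ⟨ha, hb, hne⟩ := mem_offDiag.1 hab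
    simp only [mem_biUnion, mem_union, mem_product, mem_singleton]
    exact (hT a ha b hb hne).elim (fun h ↦ ⟨b, hb, .inr ⟨h, rfl⟩⟩) fun h ↦ ⟨a, ha, .inl ⟨rfl, h⟩⟩
  have pairs_le : #T * #T ≤ #T * (2 * c + 1) := by
    calc #T * #T = #T.offDiag + #T := by
          rw [offDiag_card, Nat.sub_add_cancel (Nat.le_mul_self _)]
      _ ≤ #T * (2 * c) + #T := by
        gcongr
        refine (card_le_card offDiag_subset).trans (card_biUnion_le_card_mul _ _ _ fun a ha ↦ ?_)
        refine (card_union_le _ _).trans ?_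
        rw [singleton_product, product_singleton, card_map, card_map, two_mul]
        exact add_le_add (hN a ha) (hN a ha)
      _ = #T * (2 * c + 1) := by ring
  obtain h0 | hpos := (#T).eq_zero_or_pos
  · omega
  · exact Nat.le_of_mul_le_mul_left pairs_le hpos

end Counting

section OrderClique

/-! ### Cliques of abstract edges -/

variable {α ι β : Type*} [LinearOrder ι] [LinearOrder β]

/-- A family `S` of abstract edges, where `v e i` is the vertex of `e` in position `i`: the vertices
of each edge are listed in increasing order and distinct edges have no vertex in common. -/
structure IsEdgeFamily (v : α → ι → β) (S : Finset α) : Prop where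
  strictMono : ∀ e ∈ S, StrictMono (v e)
  ne : ∀ e ∈ S, ∀ f ∈ S, e ≠ f → ∀ i j, v e i ≠ v f j

theorem IsEdgeFamily.mono {v : α → ι → β} {S T : Finset α} (hS : IsEdgeFamily v S) (hT : T ⊆ S) :
    IsEdgeFamily v T :=
  ⟨fun e he ↦ hS.strictMono e (hT he), fun e he f hf ↦ hS.ne e (hT he) f (hT hf)⟩

variable [OrderBot ι]

/-- `T` is a clique for the pattern encoded by `R`: for any two edges of `T`, the `i`-th vertex of
the one that starts first precedes the `j`-th vertex of the other if and only if `R i j`. -/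
def IsOrderClique (v : α → ι → β) (R : ι → ι → Prop) (T : Finset α) : Prop :=
  ∀ e ∈ T, ∀ f ∈ T, v e ⊥ < v f ⊥ → ∀ i j, v e i < v f j ↔ R i j

theorem IsOrderClique.mono {v : α → ι → β} {R : ι → ι → Prop} {S T : Finset α}
    (hS : IsOrderClique v R S) (hT : T ⊆ S) : IsOrderClique v R T :=
  fun e he f hf ↦ hS e (hT he) f (hT hf)

theorem isOrderClique_singleton (v : α → ι → β) (R : ι → ι → Prop) (e : α) :
    IsOrderClique v R {e} := by
  simp [IsOrderClique]

theorem exists_isOrderClique_pair [DecidableEq α] (v : α → ι → β) (e f : α) :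
    ∃ R, IsOrderClique v R {e, f} := by
  wlog hle : v e ⊥ ≤ v f ⊥ generalizing e f
  · rw [pair_comm]
    exact this f e (le_of_not_ge hle)
  refine ⟨fun i j ↦ v e i < v f j, ?_⟩
  simp [IsOrderClique, hle.not_gt]

theorem IsOrderClique.lt_iff_lt {v : α → ι → β} {R : ι → ι → Prop} {S T : Finset α}
    (hSR : IsOrderClique v R S) (hTR : IsOrderClique v R T)
    (hS : IsEdgeFamily v S) (hT : IsEdgeFamily v T) {σ : Type*} [LinearOrder σ]
    {a b : σ → α} (ha : ∀ s, a s ∈ S) (hb : ∀ s, b s ∈ T)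
    (ha_mono : StrictMono fun s ↦ v (a s) ⊥) (hb_mono : StrictMono fun s ↦ v (b s) ⊥)
    (s t : σ) (i j : ι) : v (a s) i < v (a t) j ↔ v (b s) i < v (b t) j := by
  have lt_iff_lt_of_lt {s t : σ} (hst : s < t) (i j : ι) :
      v (a s) i < v (a t) j ↔ v (b s) i < v (b t) j :=
    (hSR _ (ha s) _ (ha t) (ha_mono hst) i j).trans (hTR _ (hb s) _ (hb t) (hb_mono hst) i j).symm
  obtain hst | rfl | hts := lt_trichotomy s t
  · exact lt_iff_lt_of_lt hst i j
  · rw [(hS.strictMono _ (ha s)).lt_iff_lt, (hT.strictMono _ (hb s)).lt_iff_lt]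
  · have ha_ne := hS.ne _ (ha t) _ (ha s) (fun h ↦ (ha_mono hts).ne (by simp only [h])) j i
    have hb_ne := hT.ne _ (hb t) _ (hb s) (fun h ↦ (hb_mono hts).ne (by simp only [h])) j i
    rw [← not_le, ha_ne.le_iff_lt, lt_iff_lt_of_lt hts, ← hb_ne.le_iff_lt, not_le]

end OrderClique

section Blocks

/-! ### Cuts, blocks and gaps -/

variable {α ι β : Type*} [LinearOrder ι] [LinearOrder β]
  {v : α → ι → β} {S T : Finset α} {D : Finset ι}

/-- In `S`, vertices in positions before `d` precede the vertices in position `d`, including those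
of other edges. -/
def IsCut (v : α → ι → β) (S : Finset α) (d : ι) : Prop :=
  ∀ e ∈ S, ∀ f ∈ S, ∀ i < d, v e i < v f d

theorem IsCut.mono {d : ι} (hS : IsCut v S d) (hT : T ⊆ S) : IsCut v T d :=
  fun e he f hf ↦ hS e (hT he) f (hT hf)

/-- The point `x` lies between the vertex of `e` in position `g` and all earlier vertices of `e`. -/
def InGap (v : α → ι → β) (e : α) (g : ι) (x : β) : Prop :=
  (∀ i < g, v e i < x) ∧ x < v e g

theorem isCut_of_forall_inGap {g : ι} {x : β} (h : ∀ e ∈ S, InGap v e g x) : IsCut v S g :=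
  fun e he f hf i hi ↦ ((h e he).1 i hi).trans (h f hf).2

variable [OrderBot ι]

/-- The least position of the block containing `i`, when the positions are cut into blocks
immediately before each element of `D`. -/
def blockStart (D : Finset ι) (i : ι) : ι := {d ∈ D | d ≤ i}.sup id

theorem blockStart_le (D : Finset ι) (i : ι) : blockStart D i ≤ i :=
  Finset.sup_le fun _ hd ↦ (mem_filter.1 hd).2

theorem le_blockStart {d i : ι} (hd : d ∈ D) (hdi : d ≤ i) : d ≤ blockStart D i :=
  le_sup (f := id) (mem_filter.2 ⟨hd, hdi⟩)

theorem blockStart_mono (D : Finset ι) : Monotone (blockStart D) := fun _ _ hij ↦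
  sup_mono (monotone_filter_right D fun _ _ hd ↦ hd.trans hij)

theorem blockStart_eq_bot_or_mem (D : Finset ι) (i : ι) :
    blockStart D i = ⊥ ∨ blockStart D i ∈ D := by
  obtain h | h := {d ∈ D | d ≤ i}.eq_empty_or_nonempty
  · exact .inl (by rw [blockStart, h, sup_empty])
  · obtain ⟨d, hd, hsup⟩ := exists_mem_eq_sup _ h id
    exact .inr (by rw [blockStart, hsup]; exact (mem_filter.1 hd).1)

theorem blockStart_blockStart (D : Finset ι) (i : ι) :
    blockStart D (blockStart D i) = blockStart D i := by
  refine (blockStart_le _ _).antisymm ?_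
  obtain h | h := blockStart_eq_bot_or_mem D i
  · simp [h]
  · exact le_blockStart h le_rfl

/-- Within the block of positions starting at `b`, the vertices of `e` all precede those of `f`. -/
def BlockLT (v : α → ι → β) (D : Finset ι) (b : ι) (e f : α) : Prop :=
  ∀ i j, blockStart D i = b → blockStart D j = b → v e i < v f j

theorem BlockLT.trans {b : ι} {e f g : α} (hef : BlockLT v D b e f) (hfg : BlockLT v D b f g) :
    BlockLT v D b e g :=
  fun i j hi hj ↦ (hef i i hi hi).trans (hfg i j hi hj)

theorem blockLT_or_exists_inGap [Finite ι] (hS : IsEdgeFamily v S) {e f : α} (he : e ∈ S)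
    (hf : f ∈ S) (hne : e ≠ f) {b : ι} (hb : blockStart D b = b) (hlt : v e b < v f b) :
    BlockLT v D b e f ∨ ∃ g, g ≠ ⊥ ∧ g ∉ D ∧ InGap v e g (v f (blockStart D g)) := by
  refine or_iff_not_imp_left.2 fun hnot ↦ ?_
  obtain ⟨i, j, hi, hj, hle⟩ : ∃ i j, blockStart D i = b ∧ blockStart D j = b ∧ v f j ≤ v e i := by
    simpa [BlockLT] using hnot
  have hbi : v f b < v e i :=
    ((((hS.strictMono f hf).monotone (hj ▸ blockStart_le D j)).trans hle)).lt_of_ne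
      (hS.ne f hf e he hne.symm b i)
  obtain ⟨g, hgi, hg⟩ := (Set.toFinite {g | v f b < v e g}).exists_le_minimal hbi
  have hbg : b < g := (hS.strictMono e he).lt_iff_lt.1 (hlt.trans hg.prop)
  have hstart : blockStart D g = b :=
    (hi ▸ blockStart_mono D hgi).antisymm (hb ▸ blockStart_mono D hbg.le)
  refine ⟨g, (bot_le.trans_lt hbg).ne', fun hgD ↦ ?_, fun h hhg ↦ ?_, ?_⟩
  · exact (hbg.trans_le (le_blockStart hgD le_rfl)).ne' hstart
  · rw [hstart]
    exact (not_lt.1 (hg.not_prop_of_lt hhg)).lt_of_ne (hS.ne e he f hf hne h b)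
  · rw [hstart]
    exact hg.prop

/-- The strict order in which `e` lies below `f` when `e` starts first and, in each block, all
vertices of `e` precede all those of `f`, or vice versa in the blocks whose start lies in `X`. -/
def SignedBlockLT (v : α → ι → β) (D X : Finset ι) (e f : α) : Prop :=
  v e ⊥ < v f ⊥ ∧ ∀ i, if blockStart D i ∈ X then BlockLT v D (blockStart D i) f e
    else BlockLT v D (blockStart D i) e f

instance (v : α → ι → β) (D X : Finset ι) : IsStrictOrder α (SignedBlockLT v D X) where
  irrefl _ h := h.1.false
  trans e f g hef hfg := ⟨hef.1.trans hfg.1, fun i ↦ by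
    have hef_i := hef.2 i
    have hfg_i := hfg.2 i
    split_ifs at hef_i hfg_i ⊢ with hX
    · exact hfg_i.trans hef_i
    · exact hef_i.trans hfg_i⟩

theorem lt_of_blockStart_lt (hS : IsEdgeFamily v S) (hcut : ∀ d ∈ D, IsCut v S d) {e f : α}
    (he : e ∈ S) (hf : f ∈ S) {i j : ι} (hij : blockStart D i < blockStart D j) :
    v e i < v f j := by
  have hj : blockStart D j ∈ D :=
    (blockStart_eq_bot_or_mem D j).resolve_left (bot_le.trans_lt hij).ne'
  have hi : i < blockStart D j := lt_of_not_ge fun h ↦ (le_blockStart hj h).not_gt hij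
  calc v e i < v f (blockStart D j) := hcut _ hj e he f hf i hi
    _ ≤ v f j := (hS.strictMono f hf).monotone (blockStart_le D j)

theorem isOrderClique_of_isChain_signedBlockLT (hS : IsEdgeFamily v S)
    (hcut : ∀ d ∈ D, IsCut v S d) {X : Finset ι}
    (hchain : IsChain (SignedBlockLT v D X) (S : Set α)) :
    IsOrderClique v
      (fun i j ↦ if blockStart D i = blockStart D j then blockStart D i ∉ X else i < j) S := by
  intro e he f hf hlt i j
  have hef : SignedBlockLT v D X e f :=
    (hchain he hf (ne_of_apply_ne (v · ⊥) hlt.ne)).resolve_right fun h ↦ h.1.not_gt hlt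
  obtain hij | hij | hij := lt_trichotomy (blockStart D i) (blockStart D j)
  · simp [hij.ne, lt_of_blockStart_lt hS hcut he hf hij, (blockStart_mono D).reflect_lt hij]
  · have hblock := hef.2 i
    split_ifs at hblock with hX
    · simp [← hij, hX, (hblock j i hij.symm rfl).le]
    · simp [← hij, hX, hblock i j rfl hij.symm]
  · simp [hij.ne', (lt_of_blockStart_lt hS hcut hf he hij).not_gt,
      ((blockStart_mono D).reflect_lt hij).not_gt]

theorem exists_inGap_of_isAntichain [Finite ι] (hS : IsEdgeFamily v S)
    (hanti : ∀ X ⊆ D, IsAntichain (SignedBlockLT v D X) (S : Set α))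
    {e f : α} (he : e ∈ S) (hf : f ∈ S) (hne : e ≠ f) :
    ∃ g, g ≠ ⊥ ∧ g ∉ D ∧
      (InGap v e g (v f (blockStart D g)) ∨ InGap v f g (v e (blockStart D g))) := by
  wlog hlt : v e ⊥ < v f ⊥ generalizing e f
  · obtain ⟨g, hg, hgD, h⟩ :=
      this hf he hne.symm ((not_lt.1 hlt).lt_of_ne (hS.ne f hf e he hne.symm ⊥ ⊥))
    exact ⟨g, hg, hgD, h.symm⟩
  -- Blocks are given the sign suggested by their first vertices, so some block violates its sign.
  have hnot := hanti {d ∈ D | v f d < v e d} (filter_subset _ _) he hf hne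
  simp only [Pi.compl_apply, compl_iff_not, SignedBlockLT, hlt, true_and, not_forall] at hnot
  obtain ⟨i, hi⟩ := hnot
  have hb := blockStart_blockStart D i
  split_ifs at hi with hX
  · obtain h | ⟨g, hg, hgD, h⟩ := blockLT_or_exists_inGap hS hf he hne.symm hb (mem_filter.1 hX).2
    · exact absurd h hi
    · exact ⟨g, hg, hgD, .inr h⟩
  · have hlt_b : v e (blockStart D i) < v f (blockStart D i) := by
      obtain h | h := blockStart_eq_bot_or_mem D i
      · rwa [h]
      · exact (not_lt.1 fun h' ↦ hX (mem_filter.2 ⟨h, h'⟩)).lt_of_ne (hS.ne e he f hf hne _ _)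
    obtain h | ⟨g, hg, hgD, h⟩ := blockLT_or_exists_inGap hS he hf hne hb hlt_b
    · exact absurd h hi
    · exact ⟨g, hg, hgD, .inl h⟩

end Blocks

section Ramsey

/-! ### The Ramsey bound for families of edges -/

variable {α ι β : Type*} [Fintype ι] [LinearOrder ι] [OrderBot ι] [LinearOrder β]
  {v : α → ι → β} {S : Finset α} {D : Finset ι} {k B : ℕ}

theorem card_le_of_card_isCut_le (hS : IsEdgeFamily v S) (hcut : ∀ d ∈ D, IsCut v S d)
    (hk : ∀ R, ∀ T ⊆ S, IsOrderClique v R T → #T ≤ k)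
    (hB : ∀ g ∈ (insert ⊥ D)ᶜ, ∀ H ⊆ S, IsCut v H g → #H ≤ B) :
    #S ≤ k ^ 2 ^ #D * (2 * (#(insert ⊥ D)ᶜ * B) + 1) := by
  classical
  have chain_le (X : D.powerset) (T : Finset α) (hTS : T ⊆ S)
      (hchain : IsChain (SignedBlockLT v D X) (T : Set α)) : #T ≤ k :=
    hk _ T hTS (isOrderClique_of_isChain_signedBlockLT (hS.mono hTS)
      (fun d hd ↦ (hcut d hd).mono hTS) hchain)
  have antichain_le (T : Finset α) (hTS : T ⊆ S)
      (hanti : ∀ X : D.powerset, IsAntichain (SignedBlockLT v D X) (T : Set α)) :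
      #T ≤ 2 * (#(insert ⊥ D)ᶜ * B) + 1 := by
    let gapNeighbors (f : α) : Finset α :=
      (insert ⊥ D)ᶜ.biUnion fun g ↦ {e ∈ T | InGap v e g (v f (blockStart D g))}
    refine card_le_of_forall_mem_or_mem gapNeighbors (fun f _ ↦ ?_) fun e he f hf hne ↦ ?_
    · exact card_biUnion_le_card_mul _ _ _ fun g hg ↦ hB g hg _ ((filter_subset _ _).trans hTS)
        (isCut_of_forall_inGap fun e he ↦ (mem_filter.1 he).2)
    · obtain ⟨g, hg, hgD, h⟩ := exists_inGap_of_isAntichain (hS.mono hTS)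
        (fun X hX ↦ hanti ⟨X, mem_powerset.2 hX⟩) he hf hne
      have hgmem : g ∈ (insert ⊥ D)ᶜ := by simp [hg, hgD]
      simp only [gapNeighbors, mem_biUnion, mem_filter]
      exact h.imp (fun h ↦ ⟨g, hgmem, he, h⟩) fun h ↦ ⟨g, hgmem, hf, h⟩
  simpa only [Fintype.card_coe, card_powerset] using
    card_le_of_card_chain_le_of_card_antichain_le (fun X : D.powerset ↦ SignedBlockLT v D X)
      chain_le antichain_le

theorem card_le_of_card_isOrderClique_le_of_isCut (hk0 : 0 < k) (hS : IsEdgeFamily v S)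
    (hbot : ⊥ ∉ D) (hcut : ∀ d ∈ D, IsCut v S d)
    (hk : ∀ R, ∀ T ⊆ S, IsOrderClique v R T → #T ≤ k) {m : ℕ}
    (hm : #D + 1 + m = Fintype.card ι) :
    #S ≤ 4 ^ m * m.factorial * k ^ (2 ^ Fintype.card ι - 2 ^ #D) := by
  induction m generalizing S D with
  | zero =>
    have hfull : (insert ⊥ D)ᶜ = (∅ : Finset ι) := by
      rw [← card_eq_zero, card_compl, card_insert_of_notMem hbot, ← hm, add_zero, Nat.sub_self]
    have hexp : 2 ^ Fintype.card ι - 2 ^ #D = 2 ^ #D := by rw [← hm, add_zero, pow_succ]; omega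
    simpa [hfull, hexp] using card_le_of_card_isCut_le (B := 0) hS hcut hk (by simp [hfull])
  | succ m ih =>
    set B := 4 ^ m * m.factorial * k ^ (2 ^ Fintype.card ι - 2 ^ (#D + 1)) with hBdef
    have hgaps : #(insert ⊥ D)ᶜ = m + 1 := by
      rw [card_compl, card_insert_of_notMem hbot, ← hm, Nat.add_sub_cancel_left]
    have hB : ∀ g ∈ (insert ⊥ D)ᶜ, ∀ H ⊆ S, IsCut v H g → #H ≤ B := by
      intro g hg H hHS hHg
      obtain ⟨hg0, hgD⟩ : g ≠ ⊥ ∧ g ∉ D := by simpa using hg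
      have hcard := card_insert_of_notMem hgD
      rw [hBdef, ← hcard]
      refine ih (hS.mono hHS) (by simp [hg0.symm, hbot]) ?_
        (fun R T hT ↦ hk R T (hT.trans hHS)) (by omega)
      exact (forall_mem_insert _ _ _).2 ⟨hHg, fun d hd ↦ (hcut d hd).mono hHS⟩
    have hexp : 2 ^ Fintype.card ι - 2 ^ #D
        = 2 ^ #D + (2 ^ Fintype.card ι - 2 ^ (#D + 1)) := by
      have : 2 ^ (#D + 1) ≤ 2 ^ Fintype.card ι := Nat.pow_le_pow_right two_pos (by omega)
      rw [pow_succ] at this ⊢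
      omega
    have hpos : 0 < (m + 1) * B := by positivity
    calc #S ≤ k ^ 2 ^ #D * (2 * ((m + 1) * B) + 1) :=
          hgaps ▸ card_le_of_card_isCut_le hS hcut hk hB
      _ ≤ k ^ 2 ^ #D * (4 * ((m + 1) * B)) := by gcongr; omega
      _ = 4 ^ (m + 1) * (m + 1).factorial * k ^ (2 ^ Fintype.card ι - 2 ^ #D) := by
        rw [hexp, pow_add, Nat.factorial_succ, hBdef]; ring

theorem four_pow_mul_factorial_le (m : ℕ) : 4 ^ m * m.factorial ≤ 2 ^ (2 ^ (m + 1) - 1) := by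
  induction m with
  | zero => norm_num
  | succ m ih =>
    have hlt : m + 1 < 2 ^ (m + 1) := Nat.lt_two_pow_self
    have hexp : 2 ^ (m + 1 + 1) - 1 = 2 ^ (m + 1) - 1 + 2 ^ (m + 1) := by
      rw [pow_succ _ (m + 1)]
      omega
    have hstep : 4 * (m + 1) ≤ 2 ^ 2 ^ (m + 1) :=
      calc 4 * (m + 1) ≤ 4 * 2 ^ m := by gcongr; exact Nat.lt_two_pow_self
        _ = 2 ^ (m + 2) := by ring
        _ ≤ 2 ^ 2 ^ (m + 1) := Nat.pow_le_pow_right two_pos hlt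
    calc 4 ^ (m + 1) * (m + 1).factorial = 4 ^ m * m.factorial * (4 * (m + 1)) := by
          rw [Nat.factorial_succ]; ring
      _ ≤ 2 ^ (2 ^ (m + 1) - 1) * 2 ^ 2 ^ (m + 1) := Nat.mul_le_mul ih hstep
      _ = 2 ^ (2 ^ (m + 1 + 1) - 1) := by rw [hexp, pow_add _ (2 ^ (m + 1) - 1)]

theorem card_le_of_card_isOrderClique_le (hS : IsEdgeFamily v S)
    (hk : ∀ R, ∀ T ⊆ S, IsOrderClique v R T → #T ≤ k) :
    #S ≤ (2 * k) ^ (2 ^ Fintype.card ι - 1) := by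
  obtain rfl | ⟨e, he⟩ := S.eq_empty_or_nonempty
  · simp
  have hk0 : 0 < k :=
    hk (fun _ _ ↦ True) {e} (singleton_subset_iff.2 he) (isOrderClique_singleton v _ e)
  obtain ⟨m, hm⟩ : ∃ m, Fintype.card ι = m + 1 := Nat.exists_eq_add_one.2 Fintype.card_pos
  have hbound := card_le_of_card_isOrderClique_le_of_isCut (D := ∅) hk0 hS (by simp) (by simp) hk
    (m := m) (by rw [hm, card_empty]; ring)
  rw [card_empty, pow_zero, hm] at hbound
  rw [hm, mul_pow]
  exact hbound.trans (Nat.mul_le_mul_right _ (four_pow_mul_factorial_le m))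

end Ramsey

section Matchings

/-! ### Isomorphisms of matchings -/

variable {r : ℕ} {M N P : Finset (Finset ℕ)} {f : ℕ → ℕ}

theorem mem_mSupport {x : ℕ} : x ∈ mSupport M ↔ ∃ e ∈ M, x ∈ e := by
  simp [mSupport, mem_sup]

theorem subset_mSupport {e : Finset ℕ} (he : e ∈ M) : e ⊆ mSupport M :=
  le_sup (f := id) he

theorem mSupport_image_image (M : Finset (Finset ℕ)) (f : ℕ → ℕ) :
    mSupport (M.image fun e ↦ e.image f) = (mSupport M).image f := by
  ext x
  simp only [mem_mSupport, mem_image]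
  grind

theorem IsMatching.mono (hM : IsMatching r M) (hN : N ⊆ M) : IsMatching r N :=
  ⟨fun e he ↦ hM.1 e (hN he), fun e he f hf ↦ hM.2 e (hN he) f (hN hf)⟩

theorem IsMatching.card_mSupport (hM : IsMatching r M) : #(mSupport M) = r * #M := by
  rw [mSupport, sup_eq_biUnion, card_biUnion (t := id) fun e he f hf ↦ hM.2 e he f hf,
    sum_const_nat (f := fun e ↦ #(id e)) hM.1, mul_comm]

theorem IsMatching.disjoint_mSupport (hM : IsMatching r M) {A B : Finset (Finset ℕ)} (hA : A ⊆ M)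
    (hB : B ⊆ M) (hAB : Disjoint A B) : Disjoint (mSupport A) (mSupport B) := by
  simp only [mSupport, Finset.disjoint_sup_left, Finset.disjoint_sup_right]
  exact fun f hf e he ↦ hM.2 e (hA he) f (hB hf) (disjoint_iff_ne.1 hAB e he f hf)

theorem IsMatching.image (hM : IsMatching r M) (hf : Set.InjOn f (mSupport M)) :
    IsMatching r (M.image fun e ↦ e.image f) := by
  simp only [IsMatching, forall_mem_image]
  refine ⟨fun e he ↦ ?_, fun e he e' he' hne ↦ ?_⟩
  · rw [card_image_of_injOn (hf.mono (coe_subset.2 (subset_mSupport he))), hM.1 e he]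
  · have hdisj := hM.2 e he e' he' (ne_of_apply_ne _ hne)
    have hunion : (e ∪ e' : Set ℕ) ⊆ mSupport M :=
      Set.union_subset (coe_subset.2 (subset_mSupport he)) (coe_subset.2 (subset_mSupport he'))
    rw [disjoint_iff_inter_eq_empty, ← image_inter_of_injOn _ _ (hf.mono hunion),
      disjoint_iff_inter_eq_empty.1 hdisj, image_empty]

theorem card_image_image (hf : Set.InjOn f (mSupport M)) : #(M.image fun e ↦ e.image f) = #M :=
  card_image_of_injOn <| (image_injOn_powerset_of_injOn hf).mono fun _ he ↦
    mem_coe.2 (mem_powerset.2 (subset_mSupport he))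

theorem matchIso_image (hf : StrictMonoOn f (mSupport M)) :
    MatchIso M (M.image fun e ↦ e.image f) := by
  refine ⟨f, ?_, hf, rfl⟩
  rw [mSupport_image_image, coe_image]
  exact hf.injOn.bijOn_image

theorem MatchIso.trans (hMN : MatchIso M N) (hNP : MatchIso N P) : MatchIso M P := by
  obtain ⟨f, hf, hf_mono, rfl⟩ := hMN
  obtain ⟨g, hg, hg_mono, rfl⟩ := hNP
  refine ⟨g ∘ f, hg.comp hf, StrictMonoOn.comp hg_mono hf_mono hf.mapsTo, ?_⟩
  simp only [image_image, Function.comp_def]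

theorem matchIso_of_lt_iff_lt {σ τ : Type*} [Fintype σ] [Fintype τ] {x y : σ → τ → ℕ}
    (h : ∀ s t i j, x s i < x t j ↔ y s i < y t j) :
    MatchIso (univ.image fun s ↦ univ.image (x s)) (univ.image fun s ↦ univ.image (y s)) := by
  have factors : Function.FactorsThrough (Function.uncurry y) (Function.uncurry x) := by
    rintro ⟨s, i⟩ ⟨t, j⟩ hxy
    exact le_antisymm (not_lt.1 ((h t s j i).not.1 hxy.not_gt))
      (not_lt.1 ((h s t i j).not.1 hxy.not_lt))
  let φ : ℕ → ℕ := Function.extend (Function.uncurry x) (Function.uncurry y) 0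
  have φ_apply (s : σ) (i : τ) : φ (x s i) = y s i := factors.extend_apply 0 (s, i)
  have φ_mono : StrictMonoOn φ (mSupport (univ.image fun s ↦ univ.image (x s))) := by
    intro p hp q hq hpq
    obtain ⟨s, i, rfl⟩ : ∃ s i, x s i = p := by simpa [mem_mSupport] using hp
    obtain ⟨t, j, rfl⟩ : ∃ t j, x t j = q := by simpa [mem_mSupport] using hq
    rwa [φ_apply, φ_apply, ← h]
  simpa [image_image, Function.comp_def, φ_apply] using matchIso_image φ_mono

theorem exists_strictMonoOn_image_eq_Icc (s : Finset ℕ) :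
    ∃ f : ℕ → ℕ, StrictMonoOn f s ∧ s.image f = Icc 1 #s := by
  have hmono : StrictMonoOn (fun x ↦ Nat.count (· ∈ s) x + 1) s := fun x hx y _ hxy ↦
    Nat.succ_lt_succ (Nat.count_strict_mono hx hxy)
  refine ⟨_, hmono, eq_of_subset_of_card_le (image_subset_iff.2 fun x hx ↦ ?_) ?_⟩
  · refine mem_Icc.2 ⟨Nat.succ_pos _, ?_⟩
    simpa [Nat.succ_le_iff] using Nat.count_lt_card (p := (· ∈ s)) s.finite_toSet hx
  · rw [card_image_of_injOn hmono.injOn, Nat.card_Icc, Nat.add_sub_cancel]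

theorem IsMatching.exists_matchIso_isOrderedMatching (hM : IsMatching r M) :
    ∃ P, IsOrderedMatching r #M P ∧ MatchIso M P := by
  obtain ⟨f, hf, himage⟩ := exists_strictMonoOn_image_eq_Icc (mSupport M)
  refine ⟨_, ⟨hM.image hf.injOn, card_image_image hf.injOn, ?_⟩, matchIso_image hf⟩
  rw [mSupport_image_image, himage, hM.card_mSupport]

theorem exists_isOrderedMatching (r n : ℕ) [NeZero r] : ∃ M, IsOrderedMatching r n M := by
  let row (i : ℕ) : Finset ℕ := (range r).image (Nat.pair i)
  have mem_row {i x : ℕ} (hx : x ∈ row i) : (Nat.unpair x).1 = i := by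
    obtain ⟨j, -, rfl⟩ := mem_image.1 hx
    rw [Nat.unpair_pair]
  have row_injective : Function.Injective row := fun i j hij ↦ by
    have hi : Nat.pair i 0 ∈ row i := mem_image_of_mem _ (mem_range.2 (NeZero.pos r))
    have hj := mem_row (hij ▸ hi)
    rwa [Nat.unpair_pair] at hj
  have hrows : IsMatching r ((range n).image row) := by
    simp only [IsMatching, forall_mem_image]
    refine ⟨fun i _ ↦ ?_, fun i _ j _ hij ↦ disjoint_left.2 fun x hxi hxj ↦ ?_⟩
    · rw [card_image_of_injective _ fun a b hab ↦ (Nat.pair_eq_pair.1 hab).2, card_range]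
    · exact hij (by rw [← mem_row hxi, mem_row hxj])
  obtain ⟨M, hM, -⟩ := hrows.exists_matchIso_isOrderedMatching
  rw [card_image_of_injective _ row_injective, card_range] at hM
  exact ⟨M, hM⟩

end Matchings

section VertexEnum

/-! ### Cliques of matchings as order cliques -/

variable {r : ℕ} {e : Finset ℕ} {M N T T₁ T₂ : Finset (Finset ℕ)} {R : Fin r → Fin r → Prop}

/-- The vertices of an edge of size `r` in increasing order; `0` if the size of the edge is
not `r`. -/
def vertexEnum (r : ℕ) (e : Finset ℕ) : Fin r → ℕ :=
  if h : #e = r then e.orderEmbOfFin h else 0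

theorem strictMono_vertexEnum (he : #e = r) : StrictMono (vertexEnum r e) := by
  rw [vertexEnum, dif_pos he]
  exact (e.orderEmbOfFin he).strictMono

theorem image_vertexEnum (he : #e = r) : univ.image (vertexEnum r e) = e := by
  rw [vertexEnum, dif_pos he, image_orderEmbOfFin_univ]

theorem vertexEnum_mem (he : #e = r) (i : Fin r) : vertexEnum r e i ∈ e := by
  rw [vertexEnum, dif_pos he]
  exact orderEmbOfFin_mem e he i

theorem vertexEnum_image {f : ℕ → ℕ} (he : #e = r) (hf : StrictMonoOn f e) (i : Fin r) :
    vertexEnum r (e.image f) i = f (vertexEnum r e i) := by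
  have hcard : #(e.image f) = r := by rw [card_image_of_injOn hf.injOn, he]
  have hmono : StrictMono (f ∘ vertexEnum r e) := fun i j hij ↦
    hf (vertexEnum_mem he i) (vertexEnum_mem he j) (strictMono_vertexEnum he hij)
  rw [vertexEnum, dif_pos hcard, ← orderEmbOfFin_unique hcard
    (fun i ↦ mem_image_of_mem f (vertexEnum_mem he i)) hmono]

theorem IsMatching.isEdgeFamily (hM : IsMatching r M) : IsEdgeFamily (vertexEnum r) M :=
  ⟨fun e he ↦ strictMono_vertexEnum (hM.1 e he), fun e he f hf hne i j ↦
    disjoint_iff_ne.1 (hM.2 e he f hf hne) _ (vertexEnum_mem (hM.1 e he) i)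
      _ (vertexEnum_mem (hM.1 f hf) j)⟩

theorem exists_strictMono_comp_of_injOn {α β : Type*} [DecidableEq α] [LinearOrder β] {g : α → β}
    {s : Finset α} (hg : Set.InjOn g s) {m : ℕ} (hm : #s = m) :
    ∃ a : Fin m → α, StrictMono (fun t ↦ g (a t)) ∧ univ.image a = s := by
  have hcard : #(s.image g) = m := by rw [card_image_of_injOn hg, hm]
  choose a ha hga using fun t ↦ mem_image.1 (orderEmbOfFin_mem (s.image g) hcard t)
  have hmono : StrictMono fun t ↦ g (a t) := by
    simpa only [hga] using (orderEmbOfFin (s.image g) hcard).strictMono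
  refine ⟨a, hmono, eq_of_subset_of_card_le (image_subset_iff.2 fun t _ ↦ ha t) ?_⟩
  rw [card_image_of_injective _ (Function.Injective.of_comp (f := g) hmono.injective), card_fin, hm]

variable [NeZero r]

theorem IsOrderClique.matchIso (h₁ : IsMatching r T₁) (h₂ : IsMatching r T₂)
    (hcard : #T₁ = #T₂) (hR₁ : IsOrderClique (vertexEnum r) R T₁)
    (hR₂ : IsOrderClique (vertexEnum r) R T₂) : MatchIso T₁ T₂ := by
  obtain ⟨m, hm⟩ : ∃ m, #T₂ = m := ⟨_, rfl⟩
  have enumerate {T : Finset (Finset ℕ)} (hT : IsMatching r T) (hTcard : #T = m) :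
      ∃ a : Fin m → Finset ℕ, (∀ t, a t ∈ T) ∧ StrictMono (fun t ↦ vertexEnum r (a t) ⊥) ∧
        (univ.image fun t ↦ univ.image (vertexEnum r (a t))) = T := by
    obtain ⟨a, ha_mono, ha⟩ := exists_strictMono_comp_of_injOn
      (g := fun e ↦ vertexEnum r e ⊥) (fun e he f hf hef ↦
        by_contra fun hne ↦ hT.isEdgeFamily.ne e he f hf hne ⊥ ⊥ hef) hTcard
    have ha_mem (t : Fin m) : a t ∈ T := ha ▸ mem_image_of_mem a (mem_univ t)
    exact ⟨a, ha_mem, ha_mono, by simp only [image_vertexEnum (hT.1 _ (ha_mem _)), ha]⟩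
  obtain ⟨a, ha, ha_mono, ha_image⟩ := enumerate h₁ (hcard.trans hm)
  obtain ⟨b, hb, hb_mono, hb_image⟩ := enumerate h₂ hm
  rw [← ha_image, ← hb_image]
  exact matchIso_of_lt_iff_lt
    (hR₁.lt_iff_lt hR₂ h₁.isEdgeFamily h₂.isEdgeFamily ha hb ha_mono hb_mono)

theorem MatchIso.isOrderClique (h : MatchIso M N) (hM : IsMatching r M)
    (hN : IsOrderClique (vertexEnum r) R N) : IsOrderClique (vertexEnum r) R M := by
  obtain ⟨φ, -, hφ, rfl⟩ := h
  have hφ : StrictMonoOn φ (mSupport M) := hφ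
  have hmem {e : Finset ℕ} (he : e ∈ M) (i : Fin r) : vertexEnum r e i ∈ mSupport M :=
    subset_mSupport he (vertexEnum_mem (hM.1 e he) i)
  have hφ_lt {e f : Finset ℕ} (he : e ∈ M) (hf : f ∈ M) (i j : Fin r) :
      vertexEnum r (e.image φ) i < vertexEnum r (f.image φ) j ↔
        vertexEnum r e i < vertexEnum r f j := by
    rw [vertexEnum_image (hM.1 e he) (hφ.mono (coe_subset.2 (subset_mSupport he))),
      vertexEnum_image (hM.1 f hf) (hφ.mono (coe_subset.2 (subset_mSupport hf))),
      hφ.lt_iff_lt (hmem he i) (hmem hf j)]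
  intro e he f hf hlt i j
  rw [← hφ_lt he hf] at hlt ⊢
  exact hN _ (mem_image_of_mem _ he) _ (mem_image_of_mem _ hf) hlt i j

theorem exists_isPClique_iff_exists_isOrderClique (hT : IsMatching r T) :
    (∃ P, IsPattern r P ∧ IsPClique P T) ↔ ∃ R, IsOrderClique (vertexEnum r) R T := by
  have pair_subset {e f : Finset ℕ} (he : e ∈ T) (hf : f ∈ T) : {e, f} ⊆ T :=
    insert_subset he (singleton_subset_iff.2 hf)
  constructor
  · rintro ⟨P, hP, hclique⟩
    obtain ⟨p, q, -, rfl⟩ := card_eq_two.1 hP.2.1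
    obtain ⟨R, hR⟩ := exists_isOrderClique_pair (vertexEnum r) p q
    refine ⟨R, fun e he f hf hlt ↦ ?_⟩
    have hne : e ≠ f := ne_of_apply_ne (vertexEnum r · ⊥) hlt.ne
    exact (hclique e he f hf hne).isOrderClique (hT.mono (pair_subset he hf)) hR
      e (by simp) f (by simp) hlt
  · rintro ⟨R, hR⟩
    obtain hsub | ⟨e₀, he₀, f₀, hf₀, hne₀⟩ := (T : Set (Finset ℕ)).subsingleton_or_nontrivial
    · obtain ⟨P, hP⟩ := exists_isOrderedMatching r 2
      exact ⟨P, hP, fun e he f hf hne ↦ absurd (hsub he hf) hne⟩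
    · have h₀ := pair_subset he₀ hf₀
      obtain ⟨P, hP, hiso⟩ := (hT.mono h₀).exists_matchIso_isOrderedMatching
      rw [card_pair hne₀] at hP
      refine ⟨P, hP, fun e he f hf hne ↦ MatchIso.trans ?_ hiso⟩
      have hef := pair_subset he hf
      exact (hR.mono hef).matchIso (hT.mono hef) (hT.mono h₀)
        (by rw [card_pair hne, card_pair hne₀]) (hR.mono h₀)

end VertexEnum

section Bounds

/-! ### Twins in cliques and the size of cliques -/

variable {r : ℕ} {M T : Finset (Finset ℕ)} {R : Fin r → Fin r → Prop}

theorem bddAbove_hasTwins (M : Finset (Finset ℕ)) : BddAbove {k | HasTwins M k} := by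
  refine ⟨#M, ?_⟩
  rintro k ⟨M₁, -, hM₁, -, -, -, rfl, -⟩
  exact card_le_card hM₁

theorem bddAbove_isPClique (r : ℕ) (M : Finset (Finset ℕ)) :
    BddAbove {k | ∃ P, IsPattern r P ∧ ∃ M' ⊆ M, IsPClique P M' ∧ #M' = k} := by
  refine ⟨#M, ?_⟩
  rintro k ⟨P, -, M', hM', -, rfl⟩
  exact card_le_card hM'

variable [NeZero r]

theorem IsOrderClique.hasTwins (hM : IsMatching r M) (hTM : T ⊆ M)
    (hT : IsOrderClique (vertexEnum r) R T) : HasTwins M (#T / 2) := by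
  obtain ⟨A, hAT, hA⟩ := exists_subset_card_eq (Nat.div_le_self #T 2)
  obtain ⟨B, hBT, hB⟩ : ∃ B ⊆ T \ A, #B = #T / 2 := exists_subset_card_eq <| by
    rw [card_sdiff_of_subset hAT]
    omega
  have hBT' : B ⊆ T := hBT.trans sdiff_subset
  have hAM := hAT.trans hTM
  have hBM := hBT'.trans hTM
  exact ⟨A, B, hAM, hBM, hM.disjoint_mSupport hAM hBM (disjoint_sdiff.mono_right hBT),
    (hT.mono hAT).matchIso (hM.mono hAM) (hM.mono hBM) (hA.trans hB.symm) (hT.mono hBT'), hA, hB⟩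

theorem IsOrderClique.card_le_cliqueMax (hM : IsMatching r M) (hTM : T ⊆ M)
    (hT : IsOrderClique (vertexEnum r) R T) : #T ≤ cliqueMax r M := by
  obtain ⟨P, hP, hPT⟩ := (exists_isPClique_iff_exists_isOrderClique (hM.mono hTM)).2 ⟨R, hT⟩
  exact le_csSup (bddAbove_isPClique r M) ⟨P, hP, T, hTM, hPT, rfl⟩

theorem exists_isOrderClique_card_eq_cliqueMax (hM : IsMatching r M) :
    ∃ T ⊆ M, (∃ R, IsOrderClique (vertexEnum r) R T) ∧ #T = cliqueMax r M := by
  obtain ⟨P₀, hP₀⟩ := exists_isOrderedMatching r 2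
  have hempty : IsPClique P₀ ∅ := by simp [IsPClique]
  obtain ⟨P, hP, T, hTM, hT, hcard⟩ :=
    Nat.sSup_mem (s := {k | ∃ P, IsPattern r P ∧ ∃ M' ⊆ M, IsPClique P M' ∧ #M' = k})
      ⟨0, P₀, hP₀, ∅, empty_subset M, hempty, card_empty⟩ (bddAbove_isPClique r M)
  exact ⟨T, hTM, (exists_isPClique_iff_exists_isOrderClique (hM.mono hTM)).1 ⟨P, hP, hT⟩, hcard⟩

theorem cliqueMax_div_two_le_twinMax (hM : IsMatching r M) : cliqueMax r M / 2 ≤ twinMax M := by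
  obtain ⟨T, hTM, ⟨R, hT⟩, hcard⟩ := exists_isOrderClique_card_eq_cliqueMax hM
  exact hcard ▸ le_csSup (bddAbove_hasTwins M) (hT.hasTwins hM hTM)

theorem card_le_two_mul_cliqueMax_pow (hM : IsMatching r M) :
    #M ≤ (2 * cliqueMax r M) ^ (2 ^ r - 1) := by
  simpa only [Fintype.card_fin] using card_le_of_card_isOrderClique_le hM.isEdgeFamily
    fun R T hTM hT ↦ hT.card_le_cliqueMax hM hTM

theorem minClique_div_two_le_minTwins (r n : ℕ) [NeZero r] : minClique r n / 2 ≤ minTwins r n := by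
  obtain ⟨M₀, hM₀⟩ := exists_isOrderedMatching r n
  obtain ⟨M, hM, htwins⟩ := Nat.sInf_mem (s := {t | ∃ M, IsOrderedMatching r n M ∧ twinMax M = t})
    ⟨_, M₀, hM₀, rfl⟩
  calc minClique r n / 2 ≤ cliqueMax r M / 2 := Nat.div_le_div_right (Nat.sInf_le ⟨M, hM, rfl⟩)
    _ ≤ twinMax M := cliqueMax_div_two_le_twinMax hM.1
    _ = minTwins r n := htwins

theorem le_two_mul_minClique_pow (r n : ℕ) [NeZero r] :
    n ≤ (2 * minClique r n) ^ (2 ^ r - 1) := by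
  obtain ⟨M₀, hM₀⟩ := exists_isOrderedMatching r n
  obtain ⟨M, hM, hclique⟩ := Nat.sInf_mem
    (s := {l | ∃ M, IsOrderedMatching r n M ∧ cliqueMax r M = l}) ⟨_, M₀, hM₀, rfl⟩
  calc n = #M := hM.2.1.symm
    _ ≤ (2 * cliqueMax r M) ^ (2 ^ r - 1) := card_le_two_mul_cliqueMax_pow hM.1
    _ = (2 * minClique r n) ^ (2 ^ r - 1) := by rw [hclique, minClique]

theorem rpow_le_two_mul_minClique (r n : ℕ) [NeZero r] :
    (n : ℝ) ^ ((1 : ℝ) / ((2 : ℝ) ^ r - 1)) ≤ 2 * minClique r n := by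
  have hexp : (1 : ℝ) / ((2 : ℝ) ^ r - 1) = ((2 ^ r - 1 : ℕ) : ℝ)⁻¹ := by
    rw [Nat.cast_pred (Nat.two_pow_pos r), one_div]
    norm_cast
  have hne : 2 ^ r - 1 ≠ 0 := Nat.sub_ne_zero_of_lt (Nat.one_lt_two_pow (NeZero.ne r))
  have hpow : (n : ℝ) ≤ (2 * minClique r n) ^ (2 ^ r - 1) :=
    mod_cast le_two_mul_minClique_pow r n
  rw [hexp]
  calc (n : ℝ) ^ ((2 ^ r - 1 : ℕ) : ℝ)⁻¹
      ≤ ((2 * minClique r n : ℝ) ^ (2 ^ r - 1)) ^ ((2 ^ r - 1 : ℕ) : ℝ)⁻¹ := by gcongr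
    _ = 2 * minClique r n := Real.pow_rpow_inv_natCast (by positivity) hne

end Bounds

end

/-- For every `r ≥ 2` and `n ≥ 1`, `t^(r)(n) ≥ ⌊L_r(n)/2⌋`;
consequently (with `L_r(n) ≥ (1/2)·n^{1/(2^r-1)}`),
`t^(r)(n) ≥ ⌊(1/4)·n^{1/(2^r-1)}⌋`. -/
theorem twins_from_cliques (r n : ℕ) (hr : 2 ≤ r) (hn : 1 ≤ n) :
    minClique r n / 2 ≤ minTwins r n ∧
    ⌊(1 / 4 : ℝ) * (n : ℝ) ^ ((1 : ℝ) / ((2 : ℝ) ^ r - 1))⌋₊ ≤ minTwins r n := by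
  have : NeZero r := ⟨by omega⟩
  have htwins := minClique_div_two_le_minTwins r n
  refine ⟨htwins, le_trans ?_ htwins⟩
  have hclique := rpow_le_two_mul_minClique r n
  calc ⌊(1 / 4 : ℝ) * (n : ℝ) ^ ((1 : ℝ) / ((2 : ℝ) ^ r - 1))⌋₊
      ≤ ⌊(minClique r n : ℝ) / (2 : ℕ)⌋₊ := Nat.floor_le_floor (by push_cast; linarith)
    _ = minClique r n / 2 := Nat.floor_div_eq_div _ _
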